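/- Suppose β ∈ (0,1). Then for each z > 0 there exists a unique point α(z) ∈ (min(z,𝔷_0), ∞) such that F(α(z);z) = 0; moreover α(z) > 𝔷_0, F(x;z) < 0 for all x ∈ (min(z,𝔷_0), α(z)), F(x;z) > 0 for all x > α(z), and ∂F/∂x(x;z) > 0 for all x ≥ α(z). In addition: if n ≤ (1+β)/(1−β) then α(z) ∈ (max(z,𝔷_0), ∞) for all z > 0; if n > (1+β)/(1−β) then α(z) ∈ (max(z,𝔷_0), 𝔷_β) for all z ∈ (0, 𝔷_β) and α(z) ∈ (𝔷_β, z) for all z ∈ (𝔷_β, ∞). -/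

import Mathlib

/-!
Write `p = n - m > 0`, `N(x) = (n-1)x - nK`, `D(x) = (1-m)x + mK` and `B(z) = B₁ z^p`, where
`A, B₁ > 0` satisfy `A + B₁ = 1` and `n A + m B₁ = n c` with `c = (1-β)/(1+β)`. Then
`F(x;z) = A x^p N(x) - B₁ z^p D(x)`.

* For `z < x ≤ 𝔷_0` we have `N(x) ≤ 0` and `x^p ≥ z^p`, so
  `F(x;z) ≤ z^p (A N(x) - B₁ D(x)) = z^p ((c n - 1) x - c n K) < 0` (`Ffun_neg_of_le_zzero`).
* For `x ≥ 𝔷_0` we have `D(x) > 0`, and `F(·;z)/D` equals `A x^p N(x)/D(x) - B₁ z^p`. The Möbius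
  function `N/D` has determinant `(n-m)K > 0`, so this quotient is strictly increasing
  (`Ffun_div_lt`); it is negative at `𝔷_0` and eventually positive, and hence has exactly one zero.
* Where `x > 𝔷_0` and `F(x;z) ≥ 0`, that inequality bounds `B₁ z^p` by `A x^p N/D`, which
  gives `D F' ≥ A x^p p (K + N D / x) > 0` (`deriv_Ffun_pos`).
* The position of `α(z)` relative to `z` and `𝔷_β` is read off from the signs of
  `F(z;z) = z^p ((c n - 1) z - c n K)` and of `F(𝔷_β;z) = A N(𝔷_β) (𝔷_β^p - z^p)`; the last formula
  holds because `A N(𝔷_β) = B₁ D(𝔷_β)`.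
-/

open Set Filter Topology

noncomputable section

/-- The coefficient `A`. -/
def Acoef (n m beta : ℝ) : ℝ := (n * (1 - beta) - m * (1 + beta)) / ((n - m) * (1 + beta))

/-- The coefficient `B(z)`. -/
def Bcoef (n m beta z : ℝ) : ℝ := 2 * n * beta * z ^ (n - m) / ((n - m) * (1 + beta))

/-- The minimal excessive function `ψ(·;z)` of the skew geometric Brownian motion. -/
def psi (n m beta z x : ℝ) : ℝ :=
  if x ≤ z then x ^ n else Acoef n m beta * x ^ n + Bcoef n m beta z * x ^ m

/-- The function `F(·;z)`. -/
def Ffun (n m beta K z x : ℝ) : ℝ :=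
  ((n - 1) * x - n * K) * Acoef n m beta * x ^ (n - m)
    + ((m - 1) * x - m * K) * Bcoef n m beta z

/-- The critical point `𝔷_c = rK/(r-b)`. -/
def zcrit (r b K : ℝ) : ℝ := r * K / (r - b)

/-- The critical point `𝔷_0 = nK/(n-1)`. -/
def zzero (n K : ℝ) : ℝ := n * K / (n - 1)

/-- The critical point `𝔷_β = nK/(n - (1+β)/(1-β))`. -/
def zbeta (n K beta : ℝ) : ℝ := n * K / (n - (1 + beta) / (1 - beta))

/-- The constant `𝔠`. -/
def gothC (n m beta : ℝ) : ℝ :=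
  (-((n - 1) * (n * (1 - beta) - m * (1 + beta))) / (2 * m * (m - 1) * beta)) ^ ((1 : ℝ) / (n - m))

/-- The function `J(·;z)`. -/
def Jfun (n m beta K z x : ℝ) : ℝ :=
  ((n - 1) * x - n * K) * Acoef n m beta * x ^ (-m)
    - ((m - 1) * x - m * K) * Acoef n m beta * z ^ (n - m) * x ^ (-n)
    - (n - m) * Acoef n m beta * (z - K) * z ^ (-m)

/-- The function `G(·,·;z)`. -/
def Gfun (n m K z x y : ℝ) : ℝ :=
  ((n - 1) * y - n * K) * z ^ m * y ^ (-m) - ((m - 1) * y - m * K) * z ^ n * y ^ (-n)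
    - ((n - 1) * x - n * K) * z ^ m * x ^ (-m) + ((m - 1) * x - m * K) * z ^ n * x ^ (-n)

/-- The function `H(·,·;z)`. -/
def Hfun (n m beta K z x y : ℝ) : ℝ :=
  y ^ (-n) * Ffun n m beta K z y
    - (1 - beta) / (1 + beta) * (((n - 1) * x - n * K) * x ^ (-m))

/-- The larger root `n` exceeds `1`: the quadratic is negative at `0` and at `1`, hence on all of
`[0,1]` by convexity. -/
lemma one_lt_root {sigma b r n : ℝ} (hr : 0 < r) (hbr : b < r) (hn : 0 < n)
    (hroot : 1 / 2 * sigma ^ 2 * n ^ 2 + (b - 1 / 2 * sigma ^ 2) * n - r = 0) : 1 < n := by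
  by_contra! h
  have h1 : 0 ≤ sigma ^ 2 * (n * (1 - n)) :=
    mul_nonneg (sq_nonneg _) (mul_nonneg hn.le (by linarith))
  have h2 : 0 ≤ r * (1 - n) := mul_nonneg hr.le (by linarith)
  have h3 : 0 < n * (r - b) := mul_pos hn (by linarith)
  nlinarith

/-- The factor `B₁` of `B(z) = B₁ z^(n-m)`, which does not depend on `z`. -/
def B1 (n m beta : ℝ) : ℝ := 2 * n * beta / ((n - m) * (1 + beta))

lemma Ffun_eq (n m beta K z x : ℝ) :
    Ffun n m beta K z x = Acoef n m beta * x ^ (n - m) * ((n - 1) * x - n * K)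
      - B1 n m beta * z ^ (n - m) * ((1 - m) * x + m * K) := by
  unfold Ffun Bcoef B1
  ring

section

variable {n m beta K z : ℝ}

lemma Acoef_pos (hn : 1 < n) (hm : m < 0) (hb0 : 0 < beta) (hb2 : beta < 1) :
    0 < Acoef n m beta := by
  have h1 : 0 < n * (1 - beta) := mul_pos (by linarith) (by linarith)
  have h2 : 0 < -m * (1 + beta) := mul_pos (by linarith) (by linarith)
  exact div_pos (by linarith) (mul_pos (by linarith) (by linarith))

lemma B1_pos (hn : 1 < n) (hm : m < 0) (hb0 : 0 < beta) : 0 < B1 n m beta :=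
  div_pos (by positivity) (mul_pos (by linarith) (by linarith))

/-- The identity `A N(x) - B₁ D(x) = (c n - 1) x - c n K`, which encodes `A + B₁ = 1` and
`n A + m B₁ = n c`. -/
lemma diag_identity (hn : 1 < n) (hm : m < 0) (hb0 : 0 < beta) (x : ℝ) :
    Acoef n m beta * ((n - 1) * x - n * K) - B1 n m beta * ((1 - m) * x + m * K)
      = ((1 - beta) / (1 + beta) * n - 1) * x - (1 - beta) / (1 + beta) * n * K := by
  have h1 : n - m ≠ 0 := by linarith
  have h2 : 1 + beta ≠ 0 := by linarith
  unfold Acoef B1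
  field_simp
  ring

lemma Ffun_diag (hn : 1 < n) (hm : m < 0) (hb0 : 0 < beta) :
    Ffun n m beta K z z = z ^ (n - m) *
      (((1 - beta) / (1 + beta) * n - 1) * z - (1 - beta) / (1 + beta) * n * K) := by
  rw [← diag_identity hn hm hb0, Ffun_eq]
  ring

lemma lt_zzero (hn : 1 < n) (hK : 0 < K) : K < zzero n K := by
  unfold zzero
  rw [lt_div_iff₀ (by linarith)]
  nlinarith

lemma numer_nonpos (hn : 1 < n) {x : ℝ} (hx : x ≤ zzero n K) : (n - 1) * x - n * K ≤ 0 := by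
  unfold zzero at hx
  rw [le_div_iff₀ (by linarith)] at hx
  linarith

lemma numer_pos (hn : 1 < n) {x : ℝ} (hx : zzero n K < x) : 0 < (n - 1) * x - n * K := by
  unfold zzero at hx
  rw [div_lt_iff₀ (by linarith)] at hx
  linarith

lemma denom_pos (hn : 1 < n) (hm : m < 0) (hK : 0 < K) {x : ℝ} (hx : zzero n K ≤ x) :
    0 < (1 - m) * x + m * K := by
  have := lt_zzero hn hK
  nlinarith

/-- `(c n - 1) x - c n K = c N(x) - (1 - c) x` is negative for `0 < x ≤ 𝔷_0`, since `0 < c < 1`. -/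
lemma diag_neg_of_le_zzero (hn : 1 < n) (hb0 : 0 < beta) (hb2 : beta < 1)
    {x : ℝ} (hx0 : 0 < x) (hx : x ≤ zzero n K) :
    ((1 - beta) / (1 + beta) * n - 1) * x - (1 - beta) / (1 + beta) * n * K < 0 := by
  have hc : 0 < (1 - beta) / (1 + beta) := div_pos (by linarith) (by linarith)
  have hc1 : (1 - beta) / (1 + beta) < 1 := by
    rw [div_lt_one (by linarith)]; linarith
  have h := numer_nonpos hn hx
  nlinarith [mul_nonneg hc.le (neg_nonneg.2 h), mul_pos hx0 (sub_pos.2 hc1)]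

lemma Ffun_neg_of_le_zzero (hn : 1 < n) (hm : m < 0) (hb0 : 0 < beta) (hb2 : beta < 1)
    (hz : 0 < z) {x : ℝ} (hzx : z < x) (hx : x ≤ zzero n K) :
    Ffun n m beta K z x < 0 := by
  have hA := Acoef_pos hn hm hb0 hb2
  have hp : z ^ (n - m) ≤ x ^ (n - m) := Real.rpow_le_rpow hz.le hzx.le (by linarith)
  have hzp : 0 < z ^ (n - m) := Real.rpow_pos_of_pos hz _
  have hN := numer_nonpos hn hx
  have hd := diag_neg_of_le_zzero hn hb0 hb2 (hz.trans hzx) hx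
  rw [← diag_identity hn hm hb0] at hd
  rw [Ffun_eq]
  have h1 := mul_neg_of_pos_of_neg hzp hd
  have h2 := mul_nonneg (mul_nonneg hA.le (sub_nonneg.2 hp)) (neg_nonneg.2 hN)
  linarith

lemma Ffun_zzero_neg (hn : 1 < n) (hm : m < 0) (hb0 : 0 < beta)
    (hK : 0 < K) (hz : 0 < z) : Ffun n m beta K z (zzero n K) < 0 := by
  have hzp : 0 < z ^ (n - m) := Real.rpow_pos_of_pos hz _
  have hN : (n - 1) * zzero n K - n * K = 0 := by
    have : n - 1 ≠ 0 := by linarith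
    unfold zzero
    field_simp
    ring
  have := mul_pos (mul_pos (B1_pos hn hm hb0) hzp) (denom_pos hn hm hK le_rfl)
  rw [Ffun_eq, hN]
  linarith

/-- `F(·;z)/D` is strictly increasing on `[𝔷_0, ∞)`, where `D(x) = (1-m)x + mK`. -/
lemma Ffun_div_lt (hn : 1 < n) (hm : m < 0) (hb0 : 0 < beta) (hb2 : beta < 1) (hK : 0 < K)
    {x y : ℝ} (hx : zzero n K ≤ x) (hxy : x < y) :
    Ffun n m beta K z x / ((1 - m) * x + m * K) < Ffun n m beta K z y / ((1 - m) * y + m * K) := by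
  have hA := Acoef_pos hn hm hb0 hb2
  have hDx := denom_pos hn hm hK hx
  have hDy := denom_pos hn hm hK (hx.trans hxy.le)
  have hx0 : 0 < x := (hK.trans (lt_zzero hn hK)).trans_le hx
  have hNy := numer_pos hn (hx.trans_lt hxy)
  have hp : x ^ (n - m) ≤ y ^ (n - m) := Real.rpow_le_rpow hx0.le hxy.le (by linarith)
  have hxp : 0 < x ^ (n - m) := Real.rpow_pos_of_pos hx0 _
  have hmob : ((n - 1) * x - n * K) / ((1 - m) * x + m * K)
      < ((n - 1) * y - n * K) / ((1 - m) * y + m * K) := by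
    rw [div_lt_div_iff₀ hDx hDy]
    have : 0 < (n - m) * K * (y - x) := mul_pos (mul_pos (by linarith) hK) (by linarith)
    linarith
  have h1 : ∀ w : ℝ, 0 < (1 - m) * w + m * K →
      Ffun n m beta K z w / ((1 - m) * w + m * K)
        = Acoef n m beta * (w ^ (n - m) * (((n - 1) * w - n * K) / ((1 - m) * w + m * K)))
          - B1 n m beta * z ^ (n - m) := by
    intro w hw
    rw [Ffun_eq, sub_div, mul_div_cancel_right₀ _ hw.ne', mul_assoc, mul_div_assoc, mul_div_assoc]
  rw [h1 x hDx, h1 y hDy]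
  have h2 := mul_lt_mul_of_pos_left hmob hxp
  have h3 := mul_le_mul_of_nonneg_right hp (div_pos hNy hDy).le
  have h4 := mul_lt_mul_of_pos_left (h2.trans_le h3) hA
  linarith

lemma Ffun_continuousOn : ContinuousOn (Ffun n m beta K z) (Ioi 0) := by
  unfold Ffun
  intro x hx
  have : ContinuousAt (fun x : ℝ => x ^ (n - m)) x :=
    Real.continuousAt_rpow_const _ _ (Or.inl (ne_of_gt hx))
  apply ContinuousAt.continuousWithinAt
  fun_prop

lemma exists_Ffun_pos (hn : 1 < n) (hm : m < 0) (hb0 : 0 < beta) (hb2 : beta < 1) (hK : 0 < K)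
    (hz : 0 < z) : ∃ x, zzero n K < x ∧ 0 < Ffun n m beta K z x := by
  have hA := Acoef_pos hn hm hb0 hb2
  have hB := mul_pos (B1_pos hn hm hb0) (Real.rpow_pos_of_pos hz (n - m))
  have ht := tendsto_rpow_atTop (y := n - m) (by linarith)
  -- For `x > 2 𝔷_0` we have `N(x) ≥ (n-1)x/2`, while `D(x) < (1-m)x`; the term `x^p` wins.
  obtain ⟨x, hx, hxz⟩ := ((ht.eventually_gt_atTop
    (B1 n m beta * z ^ (n - m) * (1 - m) / (Acoef n m beta * ((n - 1) / 2)))).and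
    (eventually_gt_atTop (2 * zzero n K))).exists
  have hz0 := hK.trans (lt_zzero hn hK)
  have hx0 : 0 < x := by linarith
  refine ⟨x, by linarith, ?_⟩
  rw [div_lt_iff₀ (mul_pos hA (by linarith))] at hx
  have hN := numer_pos hn (x := x / 2) (K := K) (by linarith)
  have hxp : 0 < x ^ (n - m) := Real.rpow_pos_of_pos hx0 _
  have h1 := mul_lt_mul_of_pos_right hx hx0
  have h2 := mul_pos (mul_pos hA hxp) hN
  have h3 := mul_pos hB (mul_pos (neg_pos.2 hm) hK)
  rw [Ffun_eq]
  linarith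

/-- Wherever `F(·;z)` is nonnegative to the right of `𝔷_0`, its derivative is positive. -/
lemma deriv_Ffun_pos (hn : 1 < n) (hm : m < 0) (hb0 : 0 < beta) (hb2 : beta < 1) (hK : 0 < K)
    {x : ℝ} (hx : zzero n K < x) (hF : 0 ≤ Ffun n m beta K z x) :
    0 < deriv (Ffun n m beta K z) x := by
  have hA := Acoef_pos hn hm hb0 hb2
  have hx0 : 0 < x := (hK.trans (lt_zzero hn hK)).trans hx
  have hD := denom_pos hn hm hK hx.le
  have hN := numer_pos hn hx
  have hxp : 0 < x ^ (n - m) := Real.rpow_pos_of_pos hx0 _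
  have hlin : ∀ a c : ℝ, HasDerivAt (fun x : ℝ => a * x + c) a x := fun a c => by
    simpa using ((hasDerivAt_id x).const_mul a).add_const c
  have hder : HasDerivAt (Ffun n m beta K z)
      (Acoef n m beta * ((n - m) * x ^ (n - m - 1)) * ((n - 1) * x + -(n * K))
        + Acoef n m beta * x ^ (n - m) * (n - 1)
        - B1 n m beta * z ^ (n - m) * (1 - m)) x := by
    have h := (((Real.hasDerivAt_rpow_const (p := n - m) (Or.inl hx0.ne')).const_mul
      (Acoef n m beta)).mul (hlin (n - 1) (-(n * K)))).sub
      ((hlin (1 - m) (m * K)).const_mul (B1 n m beta * z ^ (n - m)))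
    refine h.congr_of_eventuallyEq (Eventually.of_forall fun y => ?_)
    simp only [Ffun_eq, Pi.mul_apply, Pi.sub_apply]
    ring
  rw [hder.deriv, Real.rpow_sub_one hx0.ne']
  rw [Ffun_eq] at hF
  refine pos_of_mul_pos_left (b := (1 - m) * x + m * K) ?_ hD.le
  have h1 := mul_nonneg hF (by linarith : (0 : ℝ) ≤ 1 - m)
  have h2 : 0 < Acoef n m beta * x ^ (n - m) * ((n - m) * K) :=
    mul_pos (mul_pos hA hxp) (mul_pos (by linarith) hK)
  have h3 : 0 < Acoef n m beta * ((n - m) * (x ^ (n - m) / x)) * ((n - 1) * x + -(n * K))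
      * ((1 - m) * x + m * K) :=
    mul_pos (mul_pos (mul_pos hA (mul_pos (by linarith) (div_pos hxp hx0))) (by linarith)) hD
  linarith

/-- For each `z > 0` the function `F(·;z)` has a zero `a > 𝔷_0` at which it changes sign from
negative to positive on `(min(z,𝔷_0), ∞)`. -/
lemma exists_root (hn : 1 < n) (hm : m < 0) (hb0 : 0 < beta) (hb2 : beta < 1) (hK : 0 < K)
    (hz : 0 < z) : ∃ a, zzero n K < a ∧ Ffun n m beta K z a = 0 ∧
      (∀ x, min z (zzero n K) < x → x < a → Ffun n m beta K z x < 0) ∧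
      (∀ x, a < x → 0 < Ffun n m beta K z x) := by
  have hz0 := hK.trans (lt_zzero hn hK)
  obtain ⟨X, hX, hFX⟩ := exists_Ffun_pos (z := z) hn hm hb0 hb2 hK hz
  have hF0 := Ffun_zzero_neg hn hm hb0 hK hz
  obtain ⟨a, ha, hFa⟩ := intermediate_value_Icc hX.le
    (Ffun_continuousOn.mono fun y hy => hz0.trans_le hy.1) ⟨hF0.le, hFX.le⟩
  have haz : zzero n K < a := lt_of_le_of_ne ha.1 (by rintro rfl; linarith)
  refine ⟨a, haz, hFa, fun x hx hxa => ?_, fun x hx => ?_⟩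
  · rcases le_or_gt x (zzero n K) with h | h
    · refine Ffun_neg_of_le_zzero hn hm hb0 hb2 hz ?_ h
      rcases min_lt_iff.1 hx with h' | h'
      · exact h'
      · linarith
    · have := Ffun_div_lt (z := z) hn hm hb0 hb2 hK h.le hxa
      rw [hFa, zero_div] at this
      exact neg_of_div_neg_left this (denom_pos hn hm hK h.le).le
  · have := Ffun_div_lt (z := z) hn hm hb0 hb2 hK haz.le hx
    rw [hFa, zero_div] at this
    exact (div_pos_iff_of_pos_right (denom_pos hn hm hK (haz.trans hx).le)).1 this

end

theorem stmt_13 (sigma b r K beta n m : ℝ)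
    (hsigma : sigma ≠ 0) (hr : 0 < r) (hbr : b < r) (hK : 0 < K)
    (hb1 : -1 < beta) (hb2 : beta < 1) (hbne : beta ≠ 0)
    (hm : m < 0) (hn : 0 < n)
    (hmroot : 1 / 2 * sigma ^ 2 * m ^ 2 + (b - 1 / 2 * sigma ^ 2) * m - r = 0)
    (hnroot : 1 / 2 * sigma ^ 2 * n ^ 2 + (b - 1 / 2 * sigma ^ 2) * n - r = 0)
    (hbpos : 0 < beta) :
    ∃ alpha : ℝ → ℝ,
      (∀ z, 0 < z →
        alpha z ∈ Set.Ioi (min z (zzero n K)) ∧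
        Ffun n m beta K z (alpha z) = 0 ∧
        (∀ x ∈ Set.Ioi (min z (zzero n K)), Ffun n m beta K z x = 0 → x = alpha z) ∧
        zzero n K < alpha z ∧
        (∀ x ∈ Set.Ioo (min z (zzero n K)) (alpha z), Ffun n m beta K z x < 0) ∧
        (∀ x, alpha z < x → 0 < Ffun n m beta K z x) ∧
        (∀ x, alpha z ≤ x → 0 < deriv (Ffun n m beta K z) x)) ∧
      (n ≤ (1 + beta) / (1 - beta) → ∀ z, 0 < z → alpha z ∈ Set.Ioi (max z (zzero n K))) ∧
      ((1 + beta) / (1 - beta) < n →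
        (∀ z ∈ Set.Ioo (0 : ℝ) (zbeta n K beta),
          alpha z ∈ Set.Ioo (max z (zzero n K)) (zbeta n K beta)) ∧
        (∀ z ∈ Set.Ioi (zbeta n K beta), alpha z ∈ Set.Ioo (zbeta n K beta) z)) := by
  have hn1 := one_lt_root hr hbr hn hnroot
  have hz0 := hK.trans (lt_zzero hn1 hK)
  have hex : ∀ z : ℝ, ∃ a, 0 < z → zzero n K < a ∧ Ffun n m beta K z a = 0 ∧
      (∀ x, min z (zzero n K) < x → x < a → Ffun n m beta K z x < 0) ∧
      (∀ x, a < x → 0 < Ffun n m beta K z x) := fun z => by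
    by_cases hz : 0 < z
    · exact (exists_root hn1 hm hbpos hb2 hK hz).imp fun a h _ => h
    · exact ⟨0, fun h => absurd h hz⟩
  choose alpha halpha using hex
  -- The zero lies to the right of every point where `F` is negative ...
  have right_of : ∀ z x, 0 < z → Ffun n m beta K z x < 0 → x < alpha z := by
    intro z x hz hF
    obtain ⟨-, h0, -, hpos⟩ := halpha z hz
    rcases lt_trichotomy x (alpha z) with h | rfl | h
    · exact h
    · linarith
    · linarith [hpos x h]
  -- ... and to the left of every point of `(𝔷_0, ∞)` where `F` is positive.
  have left_of : ∀ z x, 0 < z → zzero n K < x → 0 < Ffun n m beta K z x → alpha z < x := by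
    intro z x hz hx hF
    obtain ⟨-, h0, hneg, -⟩ := halpha z hz
    rcases lt_trichotomy x (alpha z) with h | rfl | h
    · linarith [hneg x (min_lt_of_right_lt hx) h]
    · linarith
    · exact h
  have hc : 0 < (1 - beta) / (1 + beta) := div_pos (by linarith) (by linarith)
  have hcinv : (1 + beta) / (1 - beta) = ((1 - beta) / (1 + beta))⁻¹ := (inv_div _ _).symm
  refine ⟨alpha, fun z hz => ?_, fun hle z hz => ?_, fun hlt => ?_⟩
  · obtain ⟨ha, h0, hneg, hpos⟩ := halpha z hz
    refine ⟨min_lt_of_right_lt ha, h0, fun x hx hFx => ?_, ha, fun x hx => hneg x hx.1 hx.2, hpos,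
      fun x hx => ?_⟩
    · rcases lt_trichotomy x (alpha z) with h | h | h
      · linarith [hneg x hx h]
      · exact h
      · linarith [hpos x h]
    · refine deriv_Ffun_pos hn1 hm hbpos hb2 hK (ha.trans_le hx) ?_
      rcases hx.eq_or_lt with rfl | h
      · exact h0.ge
      · exact (hpos x h).le
  · refine max_lt (right_of z z hz ?_) (halpha z hz).1
    rw [Ffun_diag hn1 hm hbpos]
    refine mul_neg_of_pos_of_neg (Real.rpow_pos_of_pos hz _) ?_
    have h1 : (1 - beta) / (1 + beta) * n ≤ 1 := by
      rw [hcinv] at hle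
      calc _ ≤ (1 - beta) / (1 + beta) * ((1 - beta) / (1 + beta))⁻¹ :=
            mul_le_mul_of_nonneg_left hle hc.le
        _ = 1 := mul_inv_cancel₀ hc.ne'
    have h2 := mul_nonneg (sub_nonneg.2 h1) hz.le
    have h3 := mul_pos (mul_pos hc hn) hK
    linarith
  · have hcn : 0 < (1 - beta) / (1 + beta) * n - 1 := by
      rw [hcinv, inv_lt_iff_one_lt_mul₀ hc] at hlt
      linarith
    -- `𝔷_β` is the zero of `(c n - 1) x - c n K`.
    have hzb : zbeta n K beta
        = (1 - beta) / (1 + beta) * n * K / ((1 - beta) / (1 + beta) * n - 1) := by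
      unfold zbeta
      have h1 : n - (1 + beta) / (1 - beta) ≠ 0 := by linarith
      rw [div_eq_div_iff h1 hcn.ne']
      have h2 : 1 - beta ≠ 0 := by linarith
      have h3 : 1 + beta ≠ 0 := by linarith
      field_simp
    have hroot : ((1 - beta) / (1 + beta) * n - 1) * zbeta n K beta
        - (1 - beta) / (1 + beta) * n * K = 0 := by
      rw [hzb, mul_div_cancel₀ _ hcn.ne', sub_self]
    have hb_pos : 0 < zbeta n K beta := by
      rw [hzb]; exact div_pos (mul_pos (mul_pos hc hn) hK) hcn
    have hzz : zzero n K < zbeta n K beta := by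
      by_contra! h
      linarith [diag_neg_of_le_zzero hn1 hbpos hb2 hb_pos h]
    have hAN : 0 < Acoef n m beta * ((n - 1) * zbeta n K beta - n * K) :=
      mul_pos (Acoef_pos hn1 hm hbpos hb2) (numer_pos hn1 hzz)
    have hFb : ∀ z, Ffun n m beta K z (zbeta n K beta)
        = Acoef n m beta * ((n - 1) * zbeta n K beta - n * K)
          * (zbeta n K beta ^ (n - m) - z ^ (n - m)) := by
      intro z
      have h := hroot
      rw [← diag_identity hn1 hm hbpos] at h
      rw [Ffun_eq]
      linear_combination z ^ (n - m) * h
    refine ⟨fun z hz => ⟨max_lt (right_of z z hz.1 ?_) (halpha z hz.1).1,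
      left_of z _ hz.1 hzz ?_⟩, fun z hz => ?_⟩
    · rw [Ffun_diag hn1 hm hbpos]
      refine mul_neg_of_pos_of_neg (Real.rpow_pos_of_pos hz.1 _) ?_
      have := mul_lt_mul_of_pos_left hz.2 hcn
      linarith
    · rw [hFb]
      exact mul_pos hAN (sub_pos.2 (Real.rpow_lt_rpow hz.1.le hz.2 (by linarith)))
    · have hz' : zbeta n K beta < z := hz
      have hzpos : 0 < z := hb_pos.trans hz'
      refine ⟨right_of z _ hzpos ?_, left_of z z hzpos (hzz.trans hz') ?_⟩
      · rw [hFb]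
        exact mul_neg_of_pos_of_neg hAN
          (sub_neg.2 (Real.rpow_lt_rpow hb_pos.le hz' (by linarith)))
      · rw [Ffun_diag hn1 hm hbpos]
        refine mul_pos (Real.rpow_pos_of_pos hzpos _) ?_
        have := mul_lt_mul_of_pos_left hz' hcn
        linarith
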